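/- For all odd natural numbers m,n with m,n ≥ 3, the integral ∫_ℝ ν_m(x)·ν_n(x)·e^{−x²}/(1+2x²)² dx equals √π·(n−1)(n−2)·(∏_{j=1}^{(n−3)/2}(n − 2(1+j) + 1))² / (2·n!) if m = n, and equals 0 if m ≠ n. -/

import Mathlib

/-- Even coefficients c_{2k}(n) of the generalized power series. -/
noncomputable def ceven (n k : ℕ) : ℂ :=
  if k = 0 then 1
  else if k = 1 then -(n : ℂ)
  else (-1) ^ k * 2 ^ k * (n : ℂ) * ((n : ℂ) - ((2 * (k : ℂ) - 1) ^ 2 + 1)) *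
    (∏ j ∈ Finset.Icc 1 (k - 2), ((n : ℂ) - 2 * (1 + (j : ℂ)))) /
      (Nat.factorial (2 * k) : ℂ)

/-- Odd coefficients: `codd n k` is c_{2k-1}(n), for k ≥ 1. -/
noncomputable def codd (n k : ℕ) : ℂ :=
  if k ≤ 1 then 1
  else (-1) ^ (k + 1) * 2 ^ (k - 1) * ((n : ℂ) - ((2 * ((k : ℂ) - 1)) ^ 2 + 1)) *
    (∏ j ∈ Finset.Icc 1 (k - 2), ((n : ℂ) - (2 * (1 + (j : ℂ)) - 1))) /
      (Nat.factorial (2 * k - 1) : ℂ)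

/-- μₙ(z) = Σ_{k≥0} c_{2k}(n)·z^{2k}. -/
noncomputable def muF (n : ℕ) (z : ℂ) : ℂ := ∑' k : ℕ, ceven n k * z ^ (2 * k)

/-- νₙ(z) = Σ_{k≥1} c_{2k-1}(n)·z^{2k-1}. -/
noncomputable def nuF (n : ℕ) (z : ℂ) : ℂ := ∑' k : ℕ, codd n (k + 1) * z ^ (2 * k + 1)

/-- βₙ = μₙ + νₙ. -/
noncomputable def betaF (n : ℕ) (z : ℂ) : ℂ := muF n z + nuF n z

open Polynomial in
noncomputable def HP : ℕ → Polynomial ℝ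
  | 0 => 1
  | (k+1) => 2 * X * HP k - derivative (HP k)

open Polynomial in
lemma HP_deriv (k : ℕ) : derivative (HP (k+1)) = 2 * ((k:Polynomial ℝ)+1) * HP k := by
  induction k with
  | zero => simp [HP]
  | succ k ih =>
    rw [show HP (k+1+1) = 2 * X * HP (k+1) - derivative (HP (k+1)) from rfl, ih]
    simp only [derivative_sub, derivative_mul, ih, derivative_X, derivative_add,
      derivative_natCast, derivative_one, derivative_ofNat]
    rw [show HP (k+1) = 2 * X * HP k - derivative (HP k) from rfl]
    push_cast
    ring

open Polynomial in
lemma HP_ode (k : ℕ) : derivative (derivative (HP k)) =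
    2 * X * derivative (HP k) - 2 * (k:Polynomial ℝ) * HP k := by
  have h := HP_deriv k
  rw [show HP (k+1) = 2 * X * HP k - derivative (HP k) from rfl] at h
  simp only [derivative_sub, derivative_mul, derivative_X, derivative_ofNat] at h
  linear_combination -h

open Polynomial in
lemma HP_coeff_rec (k j : ℕ) : (((j:ℝ)+2)*((j:ℝ)+1)) * (HP k).coeff (j+2) =
    (2*(j:ℝ) - 2*k) * (HP k).coeff j := by
  have h := congrArg (fun p => coeff p j) (HP_ode k)
  have e1 : (2 * X * derivative (HP k)).coeff j = 2 * (j:ℝ) * (HP k).coeff j := by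
    rw [show (2 * X * derivative (HP k) : Polynomial ℝ) = C 2 * (X * derivative (HP k)) by
      rw [show (C 2 : Polynomial ℝ) = 2 from rfl]; ring, coeff_C_mul]
    cases j with
    | zero => simp
    | succ j => rw [coeff_X_mul, coeff_derivative]; push_cast; ring
  have e2 : (2 * (k:Polynomial ℝ) * HP k).coeff j = 2 * (k:ℝ) * (HP k).coeff j := by
    rw [show (2 * (k:Polynomial ℝ) * HP k : Polynomial ℝ) = C (2 * (k:ℝ)) * HP k by
      rw [C_mul, show (C 2 : Polynomial ℝ) = 2 from rfl]; simp, coeff_C_mul]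
  simp only [coeff_sub, e1, e2, coeff_derivative] at h
  push_cast at h
  linear_combination h

lemma HP_zero_rec (k : ℕ) : (HP (k+2)).coeff 0 = -(2*((k:ℝ)+1)) * (HP k).coeff 0 := by
  rw [show HP (k+2) = 2 * Polynomial.X * HP (k+1) - Polynomial.derivative (HP (k+1)) from rfl,
    HP_deriv]
  simp [Polynomial.mul_coeff_zero]

lemma HP_odd_zero (r : ℕ) : (HP (2*r+1)).coeff 0 = 0 := by
  induction r with
  | zero => simp [HP, Polynomial.mul_coeff_zero]
  | succ r ih => rw [show 2*(r+1)+1 = (2*r+1)+2 by ring, HP_zero_rec, ih, mul_zero]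

lemma HP_even_zero (r : ℕ) : (HP (2*r)).coeff 0 * (r.factorial : ℝ) =
    (-1)^r * ((2*r).factorial : ℝ) := by
  induction r with
  | zero => simp [HP]
  | succ r ih =>
    rw [show 2*(r+1) = (2*r)+2 by ring, HP_zero_rec, Nat.factorial_succ r,
      Nat.factorial_succ (2*r+1), Nat.factorial_succ (2*r)]
    push_cast
    linear_combination (-(2*(2*(r:ℝ)+1)) * (r+1)) * ih

lemma HP_coeff_odd (r i : ℕ) : (HP (2*r)).coeff (2*i+1) = 0 := by
  induction i with
  | zero =>
    cases r with
    | zero => simp [HP, Polynomial.coeff_one]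
    | succ r =>
      have h := congrArg (fun p => Polynomial.coeff p 0) (HP_deriv (2*r+1))
      simp only [Polynomial.coeff_derivative, Polynomial.mul_coeff_zero, HP_odd_zero] at h
      rw [show 2*(r+1) = 2*r+1+1 by ring]
      simpa using h
  | succ i ih =>
    have h := HP_coeff_rec (2*r) (2*i+1)
    rw [ih, mul_zero] at h
    have : (((2*i+1:ℕ):ℝ)+2)*(((2*i+1:ℕ):ℝ)+1) ≠ 0 := by positivity
    exact (mul_eq_zero.1 h).resolve_left this

lemma HP_coeff_even (r i : ℕ) : (HP (2*r)).coeff (2*i) = (HP (2*r)).coeff 0 *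
    ((-1)^i * 2^i * (∏ j ∈ Finset.Icc 1 i, (2*(r:ℝ)+2 - 2*j)) / ((2*i).factorial : ℝ)) := by
  induction i with
  | zero => simp
  | succ i ih =>
    have h := HP_coeff_rec (2*r) (2*i)
    rw [ih] at h
    have h1 : (((2*i:ℕ):ℝ)+2)*(((2*i:ℕ):ℝ)+1) ≠ 0 := by positivity
    apply mul_left_cancel₀ h1
    rw [show 2*(i+1) = 2*i+2 by ring, h, Finset.prod_Icc_succ_top (by omega),
      Nat.factorial_succ (2*i+1), Nat.factorial_succ (2*i)]
    have h2 : ((2*i).factorial : ℝ) ≠ 0 := by positivity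
    push_cast at h1 ⊢
    field_simp
    ring

open Polynomial in
noncomputable def YP (k : ℕ) : Polynomial ℝ :=
  derivative (HP k) + C 2 * (X^2 * derivative (HP k)) - C 6 * (X * HP k) - C 4 * (X^3 * HP k)

open Polynomial in
lemma YP_coeff_even (r i : ℕ) : (YP (2*r)).coeff (2*i) = 0 := by
  unfold YP
  simp only [coeff_sub, coeff_add, coeff_C_mul]
  rcases i with _ | _ | i
  · have := HP_coeff_odd r 0
    simp at this
    simp [coeff_derivative, mul_coeff_zero, this]
  · have h1 := HP_coeff_odd r 0
    have h2 := HP_coeff_odd r 1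
    simp at h1 h2
    have h3 : (X^3 * HP (2*r)).coeff 2 = 0 := by rw [coeff_X_pow_mul']; simp
    have h4 : (X * HP (2*r)).coeff 2 = 0 := by rw [coeff_X_mul, h1]
    have h5 : (X^2 * derivative (HP (2*r))).coeff 2 = 0 := by
      rw [coeff_X_pow_mul']; simp [coeff_derivative, h1]
    simp [h3, h4, h5, coeff_derivative, h2]
  · have h1 := HP_coeff_odd r (i+2)
    have h2 := HP_coeff_odd r (i+1)
    have h3 := HP_coeff_odd r i
    have e3 : (X^3 * HP (2*r)).coeff (2*(i+1+1)) = 0 := by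
      rw [show 2*(i+1+1) = (2*i+1)+3 by ring, coeff_X_pow_mul, h3]
    have e4 : (X * HP (2*r)).coeff (2*(i+1+1)) = 0 := by
      rw [show 2*(i+1+1) = (2*(i+1)+1)+1 by ring, coeff_X_mul, h2]
    have e5 : (X^2 * derivative (HP (2*r))).coeff (2*(i+1+1)) = 0 := by
      rw [show 2*(i+1+1) = (2*(i+1))+2 by ring, coeff_X_pow_mul, coeff_derivative, h2, zero_mul]
    rw [e3, e4, e5, coeff_derivative, show 2*(i+1+1)+1 = 2*(i+2)+1 by ring, h1]
    simp

open Polynomial in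
lemma YP_coeff_odd (r i : ℕ) : (((YP (2*r)).coeff (2*i+1) : ℝ) : ℂ) =
    ((-2*(2*(r:ℝ)+3) * (HP (2*r)).coeff 0 : ℝ) : ℂ) * codd (2*r+3) (i+1) := by
  unfold YP
  simp only [coeff_sub, coeff_add, coeff_C_mul]
  rcases i with _ | i
  · have e3 : (X^3 * HP (2*r)).coeff 1 = 0 := by rw [coeff_X_pow_mul']; simp
    have e5 : (X^2 * derivative (HP (2*r))).coeff 1 = 0 := by rw [coeff_X_pow_mul']; simp
    have e4 : (X * HP (2*r)).coeff 1 = (HP (2*r)).coeff 0 := by rw [coeff_X_mul]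
    have h := HP_coeff_rec (2*r) 0
    simp at h
    simp only [mul_zero, zero_add, e3, e4, e5, coeff_derivative, codd]
    simp
    rw [← sub_eq_zero]
    have : ((HP (2*r)).coeff 2 : ℂ) * 2 = -(2*(2*r)) * (HP (2*r)).coeff 0 := by
      have h' := congrArg (fun t : ℝ => (t:ℂ)) h
      push_cast at h'
      linear_combination h'
    linear_combination this
  · have e3 : (X^3 * HP (2*r)).coeff (2*(i+1)+1) = (HP (2*r)).coeff (2*i) := by
      rw [show 2*(i+1)+1 = (2*i)+3 by ring, coeff_X_pow_mul]
    have e4 : (X * HP (2*r)).coeff (2*(i+1)+1) = (HP (2*r)).coeff (2*(i+1)) := by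
      rw [coeff_X_mul]
    have e5 : (X^2 * derivative (HP (2*r))).coeff (2*(i+1)+1) =
        (HP (2*r)).coeff (2*(i+1)) * (2*i+2) := by
      rw [show 2*(i+1)+1 = (2*i+1)+2 by ring, coeff_X_pow_mul, coeff_derivative,
        show 2*i+1+1 = 2*(i+1) by ring]
      push_cast; ring
    have e6 : (derivative (HP (2*r))).coeff (2*(i+1)+1) =
        (HP (2*r)).coeff (2*(i+2)) * (2*i+4) := by
      rw [coeff_derivative, show 2*(i+1)+1+1 = 2*(i+2) by ring]
      push_cast; ring
    have hc : codd (2*r+3) (i+1+1) = (((-1)^(i+1) * 2^(i+1) * ((2*r+3:ℝ) - (4*(i+1)^2+1)) *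
        (∏ j ∈ Finset.Icc 1 i, (2*(r:ℝ)+2 - 2*j)) / ((2*i+3).factorial : ℝ) : ℝ) : ℂ) := by
      unfold codd
      rw [if_neg (by omega), show i+1+1-2 = i by omega, show i+1+1-1 = i+1 by omega,
        show 2*(i+1+1)-1 = 2*i+3 by omega]
      have : ∀ j : ℕ, (((2*r+3:ℕ):ℂ) - (2 * (1 + (j : ℂ)) - 1)) = 2*(r:ℂ)+2-2*j := by
        intro j; push_cast; ring
      simp only [this]
      push_cast
      ring
    rw [hc, e3, e4, e5, e6, HP_coeff_even r i, HP_coeff_even r (i+1), HP_coeff_even r (i+2),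
      Finset.prod_Icc_succ_top (show 1 ≤ i+1+1 by omega), Finset.prod_Icc_succ_top (show 1 ≤ i+1 by omega),
      show 2*(i+2) = 2*i+3+1 by ring, show 2*(i+1) = 2*i+1+1 by ring,
      Nat.factorial_succ (2*i+3), Nat.factorial_succ (2*i+2), Nat.factorial_succ (2*i+1),
      Nat.factorial_succ (2*i), ← Complex.ofReal_mul, Complex.ofReal_inj]
    have h2 : ((2*i).factorial : ℝ) ≠ 0 := by positivity
    push_cast
    field_simp
    ring

lemma nu_eq (r : ℕ) (x : ℝ) :
    ((-2*(2*(r:ℝ)+3) * (HP (2*r)).coeff 0 : ℝ) : ℂ) * nuF (2*r+3) x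
      = (((YP (2*r)).eval x : ℝ) : ℂ) := by
  unfold nuF
  rw [← tsum_mul_left]
  have h1 : ∀ i : ℕ, ((-2*(2*(r:ℝ)+3) * (HP (2*r)).coeff 0 : ℝ) : ℂ) *
      (codd (2*r+3) (i+1) * (x:ℂ)^(2*i+1)) =
      (fun j : ℕ => (((YP (2*r)).coeff j * x^j : ℝ) : ℂ)) ((fun i => 2*i+1) i) := by
    intro i
    simp only
    rw [← mul_assoc, ← YP_coeff_odd]
    push_cast; ring
  simp_rw [h1]
  rw [Function.Injective.tsum_eq (f := (fun j : ℕ => (((YP (2*r)).coeff j * x^j : ℝ) : ℂ)))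
    (g := fun i => 2*i+1) (fun a b h => by simpa using h)]
  · rw [Polynomial.eval_eq_sum_range, Complex.ofReal_sum]
    apply tsum_eq_sum
    intro j hj
    rw [Polynomial.coeff_eq_zero_of_natDegree_lt]
    · simp
    · simpa using hj
  · intro j hj
    rcases Nat.even_or_odd' j with ⟨i, rfl | rfl⟩
    · simp [YP_coeff_even] at hj
    · exact ⟨i, rfl⟩

open MeasureTheory

lemma int_poly (P : Polynomial ℝ) : Integrable (fun x : ℝ => P.eval x * Real.exp (-x^2)) := by
  have h : ∀ j : ℕ, Integrable (fun x : ℝ => x^j * Real.exp (-x^2)) := by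
    intro j
    have := integrable_rpow_mul_exp_neg_mul_sq (b := 1) one_pos (s := (j:ℝ))
      (by have : (0:ℝ) ≤ j := by positivity
          linarith)
    simpa using this
  simp_rw [Polynomial.eval_eq_sum_range, Finset.sum_mul]
  apply integrable_finsetSum
  intro j _
  simpa [mul_assoc] using (h j).const_mul (P.coeff j)

lemma int_poly_div (P : Polynomial ℝ) (s : ℕ) :
    Integrable (fun x : ℝ => P.eval x * Real.exp (-x^2) / (1+2*x^2)^s) := by
  refine (int_poly P).mono ?_ ?_
  · apply Continuous.aestronglyMeasurable
    apply Continuous.div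
    · exact P.continuous.mul (by fun_prop)
    · fun_prop
    · intro x; positivity
  · filter_upwards with x
    rw [norm_div]
    apply div_le_self (norm_nonneg _)
    rw [Real.norm_of_nonneg (by positivity)]
    exact one_le_pow₀ (by nlinarith [sq_nonneg x])

lemma exp_deriv (x : ℝ) : HasDerivAt (fun x : ℝ => Real.exp (-x^2)) (-2*x*Real.exp (-x^2)) x := by
  have := ((hasDerivAt_pow 2 x).neg).exp
  refine HasDerivAt.congr_deriv (f := fun x : ℝ => Real.exp (-x^2)) this ?_
  change Real.exp (-x^2) * _ = _
  simp; ring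

noncomputable def LI (P : Polynomial ℝ) : ℝ := ∫ x : ℝ, P.eval x * Real.exp (-x^2)

open Polynomial in
lemma LI_ibp (P : Polynomial ℝ) : LI (2 * X * P - derivative P) = 0 := by
  have h : ∀ x : ℝ, HasDerivAt (fun x : ℝ => (-P).eval x * Real.exp (-x^2))
      ((2 * X * P - derivative P).eval x * Real.exp (-x^2)) x := by
    intro x
    have := ((-P).hasDerivAt x).mul (exp_deriv x)
    refine this.congr_deriv ?_
    simp; ring
  exact integral_eq_zero_of_hasDerivAt_of_integrable h (int_poly _) (int_poly _)

lemma LI_add (P Q : Polynomial ℝ) : LI (P + Q) = LI P + LI Q := by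
  unfold LI
  rw [← integral_add (int_poly P) (int_poly Q)]
  congr 1; ext x; simp; ring

lemma LI_C_mul (c : ℝ) (Q : Polynomial ℝ) : LI (Polynomial.C c * Q) = c * LI Q := by
  unfold LI
  rw [← integral_const_mul]
  congr 1; ext x; simp; ring

lemma LI_one : LI 1 = Real.sqrt Real.pi := by
  unfold LI
  have := integral_gaussian 1
  simpa using this

open Polynomial in
lemma LI_HP_mul (k : ℕ) (Q : Polynomial ℝ) : LI (HP (k+1) * Q) = LI (HP k * derivative Q) := by
  have h := LI_ibp (HP k * Q)
  rw [show HP (k+1) * Q = (2 * X * (HP k * Q) - derivative (HP k * Q)) + HP k * derivative Q by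
    rw [derivative_mul, show HP (k+1) = 2 * X * HP k - derivative (HP k) from rfl]; ring,
    LI_add, h, zero_add]

lemma LI_HP_succ (k j : ℕ) : LI (HP (k+1) * HP (j+1)) = 2*((j:ℝ)+1) * LI (HP k * HP j) := by
  rw [LI_HP_mul, HP_deriv, ← LI_C_mul]
  congr 1
  rw [Polynomial.C_mul, show (Polynomial.C 2 : Polynomial ℝ) = 2 from rfl]
  simp; ring

lemma LI_HP (k j : ℕ) : LI (HP k * HP j) =
    if k = j then 2^k * (k.factorial:ℝ) * Real.sqrt Real.pi else 0 := by
  induction k generalizing j with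
  | zero =>
    cases j with
    | zero => simp [HP, LI_one]
    | succ j =>
      rw [mul_comm, LI_HP_mul]
      simp [HP, LI]
  | succ k ih =>
    cases j with
    | zero =>
      rw [LI_HP_mul]
      simp [HP, LI]
    | succ j =>
      rw [LI_HP_succ, ih]
      by_cases h : k = j
      · subst h
        simp [Nat.factorial_succ, pow_succ]; ring
      · simp [h]

lemma YP_eval (k : ℕ) (x : ℝ) : (YP k).eval x = (1+2*x^2) * (Polynomial.derivative (HP k)).eval x
    - (6*x+4*x^3) * (HP k).eval x := by
  simp [YP]; ring

open Polynomial in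
lemma Y_int (j k : ℕ) :
    ∫ x : ℝ, (YP j * YP k).eval x * Real.exp (-x^2) / (1+2*x^2)^2
      = (2*(k:ℝ)+6) * LI (HP j * HP k) := by
  have hd : ∀ x : ℝ, HasDerivAt
      (fun x : ℝ => (HP j * YP k).eval x * Real.exp (-x^2) / (1+2*x^2)^1)
      ((YP j * YP k).eval x * Real.exp (-x^2) / (1+2*x^2)^2
        - (C (2*(k:ℝ)+6) * (HP j * HP k)).eval x * Real.exp (-x^2)) x := by
    intro x
    have hη : HasDerivAt (fun x : ℝ => (1+2*x^2)^1) (4*x) x := by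
      have := ((hasDerivAt_pow 2 x).const_mul 2).const_add 1
      simp only [pow_one]
      refine this.congr_deriv ?_
      simp; ring
    have h0 : (1+2*x^2) ≠ 0 := by positivity
    have := (((HP j * YP k).hasDerivAt x).mul (exp_deriv x)).div hη (by simpa using h0)
    refine this.congr_deriv ?_
    have ode := congrArg (Polynomial.eval x) (HP_ode k)
    simp only [eval_sub, eval_mul, eval_X, eval_natCast, eval_ofNat] at ode
    have hY' : (derivative (YP k)).eval x = (1+2*x^2) * (derivative (derivative (HP k))).eval x
      + 4*x*(derivative (HP k)).eval x - (6*x+4*x^3) * (derivative (HP k)).eval x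
      - (6+12*x^2) * (HP k).eval x := by
      simp [YP]; ring
    simp only [derivative_mul, eval_mul, eval_add, eval_C, hY', YP_eval, ode, Pi.mul_apply]
    field_simp
    ring
  have i1 := int_poly_div (YP j * YP k) 2
  have i2 := int_poly (C (2*(k:ℝ)+6) * (HP j * HP k))
  have := integral_eq_zero_of_hasDerivAt_of_integrable hd (i1.sub i2) (int_poly_div _ 1)
  rw [integral_sub i1 i2, sub_eq_zero] at this
  rw [this, ← LI_C_mul]
  rfl

lemma prod_aux (r s t : ℕ) (h : s + t = r) : (∏ j ∈ Finset.Icc 1 s,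
    (((2*r+3:ℕ) : ℝ) - 2 * (1 + (j : ℝ)) + 1)) * (t.factorial : ℝ) = 2^s * (r.factorial : ℝ) := by
  induction s generalizing t with
  | zero => simp at h; simp [h]
  | succ s ih =>
    have := ih (t+1) (by omega)
    rw [Finset.prod_Icc_succ_top (by omega), pow_succ]
    rw [Nat.factorial_succ] at this
    subst h
    push_cast at this ⊢
    linear_combination 2 * this

theorem stmt16 (m n : ℕ) (hm : Odd m) (hn : Odd n) (hm3 : 3 ≤ m) (hn3 : 3 ≤ n) :
    ∫ x : ℝ, nuF m (x : ℂ) * nuF n (x : ℂ) *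
        Complex.exp (-(x : ℂ) ^ 2) / (1 + 2 * (x : ℂ) ^ 2) ^ 2
      = if m = n then
          ((Real.sqrt Real.pi * (((n : ℝ) - 1) * ((n : ℝ) - 2)) *
            (∏ j ∈ Finset.Icc 1 ((n - 3) / 2), ((n : ℝ) - 2 * (1 + (j : ℝ)) + 1)) ^ 2 /
              (2 * (Nat.factorial n : ℝ)) : ℝ) : ℂ)
        else 0 := by
  obtain ⟨q, rfl⟩ : ∃ q, m = 2*q+3 := by
    obtain ⟨a, rfl⟩ := hm; exact ⟨a-1, by omega⟩
  obtain ⟨r, rfl⟩ : ∃ r, n = 2*r+3 := by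
    obtain ⟨a, rfl⟩ := hn; exact ⟨a-1, by omega⟩
  have hH : ∀ r : ℕ, (HP (2*r)).coeff 0 ≠ 0 := by
    intro r h
    have := HP_even_zero r
    rw [h, zero_mul] at this
    have h2 : ((2*r).factorial : ℝ) ≠ 0 := by positivity
    exact mul_ne_zero (pow_ne_zero _ (by norm_num)) h2 this.symm
  set b : ℕ → ℝ := fun r => -2*(2*(r:ℝ)+3) * (HP (2*r)).coeff 0 with hb
  have hb0 : ∀ r, b r ≠ 0 := fun r =>
    mul_ne_zero (mul_ne_zero (by norm_num) (by positivity)) (hH r)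
  have hnu : ∀ (r : ℕ) (x : ℝ), nuF (2*r+3) x = (((YP (2*r)).eval x / b r : ℝ) : ℂ) := by
    intro r x
    have := nu_eq r x
    have h0 : ((b r : ℝ) : ℂ) ≠ 0 := by exact_mod_cast hb0 r
    rw [Complex.ofReal_div, eq_div_iff h0, mul_comm]
    exact this
  have key : ∀ x : ℝ, nuF (2*q+3) (x : ℂ) * nuF (2*r+3) (x : ℂ) *
        Complex.exp (-(x : ℂ) ^ 2) / (1 + 2 * (x : ℂ) ^ 2) ^ 2 =
      (((1/(b q * b r)) * ((YP (2*q) * YP (2*r)).eval x * Real.exp (-x^2) / (1+2*x^2)^2) : ℝ) : ℂ) := by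
    intro x
    rw [hnu, hnu, Polynomial.eval_mul]
    push_cast
    field_simp
  simp_rw [key]
  rw [integral_complex_ofReal, integral_const_mul, Y_int, LI_HP]
  by_cases h : q = r
  · subst h
    rw [if_pos rfl, if_pos rfl, Complex.ofReal_inj]
    have hp := prod_aux q q 0 (by omega)
    simp only [Nat.factorial_zero, Nat.cast_one, mul_one] at hp
    rw [show (2*q+3-3)/2 = q by omega, hp]
    have hz := HP_even_zero q
    have hf : ((q.factorial:ℕ):ℝ) ≠ 0 := by positivity
    have hf2 : (((2*q).factorial:ℕ):ℝ) ≠ 0 := by positivity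
    have hz2 : (HP (2*q)).coeff 0 ^ 2 * (q.factorial:ℝ)^2 = ((2*q).factorial:ℝ)^2 := by
      rw [← mul_pow, hz, mul_pow, ← pow_mul, mul_comm q 2, pow_mul]; simp
    have hH0 := hH q
    rw [Nat.factorial_succ (2*q+2), Nat.factorial_succ (2*q+1), Nat.factorial_succ (2*q)]
    simp only [hb]
    rw [show (2:ℝ)^(2*q) = (2^q)^2 by rw [← pow_mul, mul_comm]]
    rw [div_mul_eq_mul_div, div_eq_div_iff (by positivity) (by positivity)]
    push_cast
    linear_combination (-(4 * Real.sqrt Real.pi * (2^q)^2 * (2*(q:ℝ)+3)^2 * (2*q+2) * (2*q+1))) * hz2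
  · rw [if_neg (by omega), if_neg (by omega)]
    simp
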